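/- For every real polynomial P of degree at most q (q ∈ ℕ, q ≥ 1) and every integer k ≥ 0: sup over t in [0, 1/(2q²)] of |P^{(k)}(t)| is at most (2^{2k+1}·q^{4k}/(2k−1)!!) times the supremum over integers n ≥ q² of |P(1/n)|. -/

import Mathlib

/-!
Markov brothers inequality, interpolated form.
-/

open Polynomial in
lemma mb_T_bound (q k : ℕ) :
    (derivative^[k] (Chebyshev.T ℝ (q : ℤ))).eval 1 ≤
      (q : ℝ) ^ (2 * k) / (Nat.doubleFactorial (2 * k - 1) : ℝ) := by
  have hdf : ∀ k : ℕ, ((Nat.doubleFactorial (2 * k - 1) : ℕ) : ℝ)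
      = ∏ l ∈ Finset.range k, (2 * (l : ℝ) + 1) := by
    intro k
    induction k with
    | zero => simp
    | succ m ih =>
      rw [Finset.prod_range_succ, ← ih, show 2 * (m + 1) - 1 = 2 * m + 1 by omega,
        Nat.doubleFactorial_add_one]
      push_cast
      ring
  have h := Chebyshev.iterate_derivative_T_eval_one (R := ℝ) (q : ℤ) k
  push_cast at h
  rw [← hdf] at h
  have hpos : (0 : ℝ) < (Nat.doubleFactorial (2 * k - 1) : ℝ) := by
    exact_mod_cast Nat.doubleFactorial_pos _
  rw [le_div_iff₀ hpos, mul_comm, h]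
  by_cases hk : k ≤ q
  · calc _ ≤ ∏ l ∈ Finset.range k, (q : ℝ) ^ 2 := by
          apply Finset.prod_le_prod
          · intro l hl
            have : (l : ℝ) ≤ q := by
              have := Finset.mem_range.mp hl
              exact_mod_cast (by omega : l ≤ q)
            have : (l : ℝ) ^ 2 ≤ (q : ℝ) ^ 2 := by gcongr
            simpa using this
          · intro l hl
            simp
            try positivity
      _ = _ := by simp [pow_mul]
  · rw [Finset.prod_eq_zero (i := q) (by simpa using hk) (by simp)]
    positivity

open Polynomial in
lemma mb_endpoint_one (q k : ℕ) (P : ℝ[X]) (hP : P.natDegree ≤ q) (M : ℝ) (hM : 0 ≤ M)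
    (hb : ∀ x ∈ Set.Icc (-1 : ℝ) 1, |P.eval x| ≤ M) :
    |(derivative^[k] P).eval 1| ≤
      (q : ℝ) ^ (2 * k) / (Nat.doubleFactorial (2 * k - 1) : ℝ) * M := by
  set K := (q : ℝ) ^ (2 * k) / (Nat.doubleFactorial (2 * k - 1) : ℝ) with hK
  have hK0 : 0 ≤ K := by positivity
  have key : ∀ ε : ℝ, 0 < ε → |(derivative^[k] P).eval 1| ≤ K * (M + ε) := by
    intro ε hε
    have hpos : 0 < M + ε := by linarith
    have main : ∀ c : ℝ, |c| = (M + ε)⁻¹ → c * (derivative^[k] P).eval 1 ≤ K := by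
      intro c hc
      have h := Chebyshev.eval_iterate_derivative_le_of_forall_abs_le_one (n := q) (P := C c * P)
        (k := k) (x := 1) le_rfl ?_ ?_
      · rw [iterate_derivative_C_mul, eval_C_mul] at h
        exact h.trans (mb_T_bound q k)
      · exact degree_le_of_natDegree_le ((natDegree_C_mul_le _ _).trans hP)
      · intro x hx
        rw [eval_C_mul, abs_mul, hc, inv_mul_le_iff₀ hpos]
        linarith [hb x hx]
    have h1 := main (M + ε)⁻¹ (abs_of_pos (inv_pos.mpr hpos))
    have h2 := main (-(M + ε)⁻¹) (by rw [abs_neg]; exact abs_of_pos (inv_pos.mpr hpos))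
    rw [inv_mul_le_iff₀ hpos] at h1
    rw [neg_mul, ← mul_neg, inv_mul_le_iff₀ hpos] at h2
    rw [abs_le]
    constructor <;> linarith
  by_contra! hcon
  set D := |(derivative^[k] P).eval 1|
  have hd : 0 < D - K * M := by linarith
  have h := key ((D - K * M) / (K + 1)) (by positivity)
  have : K * ((D - K * M) / (K + 1)) < D - K * M := by
    rw [← mul_div_assoc, div_lt_iff₀ (by positivity)]
    nlinarith
  linarith

open Polynomial in
lemma mb_iter_comp (P : ℝ[X]) (a c : ℝ) (k : ℕ) :
    derivative^[k] (P.comp (C a + C c * X)) = C (c ^ k) * (derivative^[k] P).comp (C a + C c * X) := by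
  induction k with
  | zero => simp
  | succ m ih =>
    rw [Function.iterate_succ_apply', ih, Function.iterate_succ_apply', derivative_C_mul,
      derivative_comp]
    simp [pow_succ]
    ring

open Polynomial in
lemma mb_endpoint (q k : ℕ) (P : ℝ[X]) (hP : P.natDegree ≤ q) (M : ℝ) (hM : 0 ≤ M) (s t : ℝ)
    (hst : s ≠ t) (hb : ∀ x ∈ Set.uIcc s t, |P.eval x| ≤ M) :
    |(derivative^[k] P).eval t| ≤
      (2 / |t - s|) ^ k * ((q : ℝ) ^ (2 * k) / (Nat.doubleFactorial (2 * k - 1) : ℝ) * M) := by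
  have h := mb_endpoint_one q k (P.comp (C ((s + t) / 2) + C ((t - s) / 2) * X)) ?_ M hM ?_
  · rw [mb_iter_comp, eval_C_mul, eval_comp] at h
    simp only [eval_add, eval_C, eval_mul, eval_X] at h
    rw [show (s + t) / 2 + (t - s) / 2 * 1 = t by ring, abs_mul, abs_pow, abs_div, abs_two] at h
    have hpos : 0 < |t - s| := abs_pos.mpr (sub_ne_zero.mpr hst.symm)
    calc _ = (2 / |t - s|) ^ k * ((|t - s| / 2) ^ k * |(derivative^[k] P).eval t|) := by
          rw [← mul_assoc, ← mul_pow]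
          have : 2 / |t - s| * (|t - s| / 2) = 1 := by field_simp
          rw [this]; simp
      _ ≤ _ := by gcongr
  · refine natDegree_comp_le.trans ?_
    have : (C ((s + t) / 2) + C ((t - s) / 2) * X : ℝ[X]).natDegree ≤ 1 := by
      compute_degree
    nlinarith
  · intro x hx
    rw [eval_comp]
    apply hb
    simp only [eval_add, eval_C, eval_mul, eval_X]
    rw [Set.mem_uIcc]
    obtain ⟨h1, h2⟩ := hx
    rcases le_total s t with h | h
    · left; constructor <;> nlinarith
    · right; constructor <;> nlinarith

open Polynomial in
lemma mb_iteratedDeriv (P : ℝ[X]) (k : ℕ) :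
    iteratedDeriv k (fun s => P.eval s) = fun s => (derivative^[k] P).eval s := by
  induction k with
  | zero => simp
  | succ m ih =>
    rw [iteratedDeriv_succ, ih]
    funext s
    rw [Function.iterate_succ_apply', Polynomial.deriv]

open Polynomial in
/-- Second order mean value estimate around a critical point. -/
lemma mb_second (P : ℝ[X]) (a b x₀ y K : ℝ) (hx : x₀ ∈ Set.Icc a b) (hy : y ∈ Set.Icc a b)
    (h0 : (derivative P).eval x₀ = 0)
    (hK : ∀ x ∈ Set.Icc a b, |(derivative^[2] P).eval x| ≤ K) :
    |P.eval y - P.eval x₀| ≤ K * |y - x₀| ^ 2 := by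
  have hK0 : 0 ≤ K := (abs_nonneg _).trans (hK _ hx)
  have hsub : Set.uIcc x₀ y ⊆ Set.Icc a b := Set.uIcc_subset_Icc hx hy
  have h1 : ∀ z ∈ Set.uIcc x₀ y, |(derivative P).eval z| ≤ K * |y - x₀| := by
    intro z hz
    have := Convex.norm_image_sub_le_of_norm_deriv_le (f := fun s => (derivative P).eval s)
      (s := Set.Icc a b) (C := K) (x := x₀) (y := z)
      (fun x _ => (derivative P).differentiableAt)
      (fun x hx => by
        rw [Polynomial.deriv]
        exact hK x hx) (convex_Icc a b) hx (hsub hz)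
    rw [h0, sub_zero, Real.norm_eq_abs, Real.norm_eq_abs] at this
    refine this.trans ?_
    exact mul_le_mul_of_nonneg_left (Set.abs_sub_left_of_mem_uIcc hz) hK0
  have := Convex.norm_image_sub_le_of_norm_deriv_le (f := fun s => P.eval s)
      (s := Set.uIcc x₀ y) (C := K * |y - x₀|) (x := x₀) (y := y)
      (fun x _ => P.differentiableAt)
      (fun x hx => by
        rw [Polynomial.deriv]
        exact h1 x hx) (convex_uIcc x₀ y) Set.left_mem_uIcc Set.right_mem_uIcc
  rw [Real.norm_eq_abs, Real.norm_eq_abs] at this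
  calc _ ≤ _ := this
    _ = _ := by ring

open Polynomial in
lemma mb_sup (q : ℕ) (hq : 1 ≤ q) (P : ℝ[X]) (hP : P.natDegree ≤ q) (S : ℝ)
    (hS : ∀ n : ℕ, q ^ 2 ≤ n → |P.eval (1 / (n : ℝ))| ≤ S) :
    ∀ x ∈ Set.Icc (0 : ℝ) (1 / (q : ℝ) ^ 2), |P.eval x| ≤ 2 * S := by
  have hq0 : (0 : ℝ) < q := by exact_mod_cast hq
  have hS0 : 0 ≤ S := (abs_nonneg _).trans (hS _ le_rfl)
  have hL : (0 : ℝ) ≤ 1 / (q : ℝ) ^ 2 := by positivity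
  obtain ⟨x₀, hx₀, hmax⟩ := (isCompact_Icc (a := (0 : ℝ)) (b := 1 / (q : ℝ) ^ 2)).exists_isMaxOn
    ⟨0, Set.left_mem_Icc.mpr hL⟩ (f := fun x => |P.eval x|) (by fun_prop)
  suffices h : |P.eval x₀| ≤ 2 * S from fun x hx => (hmax hx).trans h
  set M := |P.eval x₀| with hM
  have hM0 : 0 ≤ M := abs_nonneg _
  have hMb : ∀ x ∈ Set.Icc (0 : ℝ) (1 / (q : ℝ) ^ 2), |P.eval x| ≤ M := fun x hx => hmax hx
  rcases eq_or_lt_of_le hx₀.1 with h0 | h0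
  · -- the maximum is at `0`, a limit of grid points
    have ht : Filter.Tendsto (fun n : ℕ => |P.eval (1 / (n : ℝ))|) Filter.atTop
        (nhds |P.eval 0|) := by
      have hc : Continuous (fun x : ℝ => |P.eval x|) := by fun_prop
      exact (hc.tendsto 0).comp tendsto_one_div_atTop_nhds_zero_nat
    have : |P.eval 0| ≤ S := le_of_tendsto ht (by
      filter_upwards [Filter.eventually_ge_atTop (q ^ 2)] with n hn using hS n hn)
    rw [hM, ← h0]; linarith
  rcases eq_or_lt_of_le hx₀.2 with h1 | h1
  · have := hS (q ^ 2) le_rfl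
    push_cast at this
    rw [hM, h1]; linarith
  -- interior maximum
  have hder : (derivative P).eval x₀ = 0 := by
    have hnhds : Set.Icc (0 : ℝ) (1 / (q : ℝ) ^ 2) ∈ nhds x₀ := Icc_mem_nhds h0 h1
    rw [← Polynomial.deriv]
    rcases le_total 0 (P.eval x₀) with hs | hs
    · apply IsLocalMax.deriv_eq_zero
      filter_upwards [hnhds] with x hx
      have := hMb x hx
      rw [hM, abs_of_nonneg hs] at this
      exact (le_abs_self _).trans this
    · apply IsLocalMin.deriv_eq_zero
      filter_upwards [hnhds] with x hx
      have := hMb x hx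
      rw [hM, abs_of_nonpos hs] at this
      linarith [neg_abs_le (P.eval x)]
  set n := ⌊1 / x₀⌋₊ with hn
  have hinv : (q : ℝ) ^ 2 < 1 / x₀ := by
    rw [lt_div_iff₀ h0]; rw [lt_div_iff₀ (by positivity)] at h1; linarith
  have hnq : q ^ 2 ≤ n := Nat.le_floor (by push_cast; exact hinv.le)
  have hnq' : (q : ℝ) ^ 2 ≤ n := by exact_mod_cast hnq
  have hn0 : (0 : ℝ) < n := lt_of_lt_of_le (by positivity) hnq'
  have hn1 : (n : ℝ) ≤ 1 / x₀ := Nat.floor_le (by positivity)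
  have hn2 : 1 / x₀ < n + 1 := Nat.lt_floor_add_one _
  have hb : x₀ ≤ 1 / n := by
    rw [le_div_iff₀ hn0]; rw [le_div_iff₀ h0] at hn1; linarith
  have ha : 1 / ((n : ℝ) + 1) ≤ x₀ := by
    rw [div_le_iff₀ (by positivity)]; rw [div_lt_iff₀ h0] at hn2; linarith
  have hgap : 1 / (n : ℝ) - 1 / ((n : ℝ) + 1) = 2 * (1 / (2 * n * (n + 1))) := by
    field_simp; ring
  have hLn : 1 / (n : ℝ) ≤ 1 / (q : ℝ) ^ 2 := one_div_le_one_div_of_le (by positivity) hnq'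
  have hab : 1 / ((n : ℝ) + 1) ≤ 1 / n := ha.trans hb
  obtain ⟨y, hy, hyS, hyd⟩ : ∃ y ∈ Set.Icc (1 / ((n : ℝ) + 1)) (1 / n), |P.eval y| ≤ S ∧
      |y - x₀| ≤ 1 / (2 * n * (n + 1)) := by
    rcases le_total (1 / (n : ℝ) - x₀) (1 / (2 * n * (n + 1))) with h | h
    · refine ⟨1 / n, Set.right_mem_Icc.mpr hab, hS n hnq, ?_⟩
      rw [abs_of_nonneg (by linarith)]; exact h
    · refine ⟨1 / (n + 1), Set.left_mem_Icc.mpr hab, ?_, ?_⟩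
      · have := hS (n + 1) (by omega)
        push_cast at this
        exact this
      · rw [abs_of_nonpos (by linarith)]; linarith
  have hsec := mb_second P (1 / ((n : ℝ) + 1)) (1 / n) x₀ y
    ((2 * (n + 1)) ^ 2 * ((q : ℝ) ^ 4 / 3 * M)) ⟨ha, hb⟩ hy hder (by
      intro x hx
      have hapos : (0 : ℝ) < 1 / ((n : ℝ) + 1) := by positivity
      have hx0 : 0 < x := lt_of_lt_of_le hapos hx.1
      have h := mb_endpoint q 2 P hP M hM0 0 x hx0.ne (by
        intro z hz
        rw [Set.uIcc_of_le hx0.le] at hz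
        exact hMb z ⟨hz.1, hz.2.trans (hx.2.trans hLn)⟩)
      have h3 : Nat.doubleFactorial (2 * 2 - 1) = 3 := by decide
      rw [h3, sub_zero, abs_of_pos hx0] at h
      norm_num at h
      refine h.trans ?_
      have h2 : 2 / x ≤ 2 * (n + 1) := by
        have := hx.1
        rw [div_le_iff₀ (by positivity)] at this
        rw [div_le_iff₀ hx0]; linarith
      gcongr)
  have hfin : (2 * ((n : ℝ) + 1)) ^ 2 * ((q : ℝ) ^ 4 / 3 * M) * |y - x₀| ^ 2 ≤ M / 3 := by
    calc _ ≤ (2 * ((n : ℝ) + 1)) ^ 2 * ((q : ℝ) ^ 4 / 3 * M) * (1 / (2 * n * (n + 1))) ^ 2 := by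
          gcongr
      _ = ((q : ℝ) ^ 2 / n) ^ 2 * (M / 3) := by field_simp
      _ ≤ 1 ^ 2 * (M / 3) := by
          gcongr
          rw [div_le_one hn0]; exact hnq'
      _ = M / 3 := by ring
  have htri : M ≤ |P.eval y| + |P.eval y - P.eval x₀| := by
    have := abs_sub_abs_le_abs_sub (P.eval x₀) (P.eval y)
    rw [abs_sub_comm] at this
    linarith
  linarith

theorem markov_brothers_interpolated
    (q : ℕ) (hq : 1 ≤ q) (P : Polynomial ℝ) (hP : P.natDegree ≤ q) (k : ℕ) :
    ∀ t ∈ Set.Icc (0 : ℝ) (1 / (2 * (q : ℝ) ^ 2)),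
      |iteratedDeriv k (fun s => P.eval s) t| ≤
        ((2 : ℝ) ^ (2 * k + 1) * (q : ℝ) ^ (4 * k) / (Nat.doubleFactorial (2 * k - 1) : ℝ)) *
          sSup {y : ℝ | ∃ n : ℕ, q ^ 2 ≤ n ∧ y = |P.eval (1 / (n : ℝ))|} := by
  intro t ht
  have hq0 : (0 : ℝ) < q := by exact_mod_cast hq
  set S := sSup {y : ℝ | ∃ n : ℕ, q ^ 2 ≤ n ∧ y = |P.eval (1 / (n : ℝ))|} with hSdef
  have hbdd : BddAbove {y : ℝ | ∃ n : ℕ, q ^ 2 ≤ n ∧ y = |P.eval (1 / (n : ℝ))|} := by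
    have hc : ContinuousOn (fun x : ℝ => |P.eval x|) (Set.Icc 0 1) := by fun_prop
    refine ((isCompact_Icc (a := (0 : ℝ)) (b := 1)).image_of_continuousOn hc).bddAbove.mono ?_
    rintro y ⟨n, hn, rfl⟩
    refine ⟨1 / n, ⟨by positivity, ?_⟩, rfl⟩
    have : 1 ≤ n := le_trans (Nat.one_le_pow _ _ hq) hn
    have : (1 : ℝ) ≤ n := by exact_mod_cast this
    rw [div_le_one (by linarith)]; exact this
  have hS : ∀ n : ℕ, q ^ 2 ≤ n → |P.eval (1 / (n : ℝ))| ≤ S :=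
    fun n hn => le_csSup hbdd ⟨n, hn, rfl⟩
  have hS0 : 0 ≤ S := (abs_nonneg _).trans (hS _ le_rfl)
  have hsup := mb_sup q hq P hP S hS
  have hLpos : (0 : ℝ) < 1 / (2 * (q : ℝ) ^ 2) := by positivity
  have h2L : 1 / (q : ℝ) ^ 2 = 1 / (2 * (q : ℝ) ^ 2) + 1 / (2 * (q : ℝ) ^ 2) := by
    field_simp; ring
  have h := mb_endpoint q k P hP (2 * S) (by linarith) (t + 1 / (2 * (q : ℝ) ^ 2)) t
    (by linarith) (by
      intro x hx
      rw [Set.uIcc_of_ge (by linarith)] at hx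
      apply hsup
      exact ⟨ht.1.trans hx.1, by linarith [hx.2, ht.2]⟩)
  rw [mb_iteratedDeriv]
  refine h.trans (le_of_eq ?_)
  have e1 : |t - (t + 1 / (2 * (q : ℝ) ^ 2))| = 1 / (2 * (q : ℝ) ^ 2) := by
    rw [show t - (t + 1 / (2 * (q : ℝ) ^ 2)) = -(1 / (2 * (q : ℝ) ^ 2)) by ring, abs_neg,
      abs_of_pos hLpos]
  have e2 : (2 : ℝ) / (1 / (2 * (q : ℝ) ^ 2)) = 2 ^ 2 * (q : ℝ) ^ 2 := by
    field_simp; try norm_num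
  rw [e1, e2, mul_pow, ← pow_mul, ← pow_mul, pow_succ, show 4 * k = 2 * k + 2 * k by ring, pow_add]
  ring
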